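/- Let s ≥ 3 and n = T_s + 3. Then the number of partitions λ of n with deg(λ) = Δ_n is exactly 6; more precisely, exactly 1 maximizer has (A, B) = (2, 0), exactly 4 maximizers have (A, B) = (1, 1), and exactly 1 maximizer has (A, B) = (0, 2). -/

import Mathlib

/-!
Let `λ` have part sizes `d₁ < ⋯ < d_s`. The differences `dᵢ - i` are weakly increasing, so they
form a partition, whose conjugate `μ` has parts at most `s`; let `ν` be what is left of `λ` when one
copy of each part size is removed. Then `|λ| = T s + |μ| + |ν|`, the gap bonus of `λ` is the number
of distinct parts of `μ`, and the multiplicity bonus is the number of distinct parts of `ν`.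

If `q ≤ s`, this identifies the partitions of `T s + q` of support `s` with *all* pairs `(μ, ν)`
such that `|μ| + |ν| = q`: the sizes `1, …, s - |μ|` stay occupied, so every part of `ν` is a part
size. A larger support is impossible because `T (s + 1) > T s + q`, and a support `r < s` gives
degree at most `r (r - 1) + 2 r ≤ s (s - 1)`, which is too small as soon as `q > 0`. The maximizers
are therefore the pairs with the most distinct parts in total, and for `q = 3` there are ten pairs
to inspect.
-/

namespace PartitionDegree

/-- The `m`-th triangular number. -/
def T (m : ℕ) : ℕ := m * (m + 1) / 2

/-- The number of distinct part sizes of a partition. -/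
def supp {n : ℕ} (lam : n.Partition) : ℕ := lam.parts.toFinset.card

/-- The gap-bonus count: distinct part sizes `L ≥ 2` such that `L - 1` is not a part size. -/
def gapBonus {n : ℕ} (lam : n.Partition) : ℕ :=
  (lam.parts.toFinset.filter (fun L => 2 ≤ L ∧ (L - 1) ∉ lam.parts)).card

/-- The multiplicity-bonus count: distinct part sizes occurring with multiplicity at least 2. -/
def multBonus {n : ℕ} (lam : n.Partition) : ℕ :=
  (lam.parts.toFinset.filter (fun L => 2 ≤ lam.parts.count L)).card

/-- The degree of a partition in the partition graph. -/
def deg {n : ℕ} (lam : n.Partition) : ℕ :=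
  supp lam * (supp lam - 1) + gapBonus lam + multBonus lam

/-- The maximal degree over all partitions of `n`. -/
def maxDeg (n : ℕ) : ℕ := Finset.univ.sup (fun lam : n.Partition => deg lam)

/-- `ρ(q)`: the maximum of `a + b` over pairs with `T a + T b ≤ q`. -/
noncomputable def rho (q : ℕ) : ℕ := sSup {c : ℕ | ∃ a b : ℕ, c = a + b ∧ T a + T b ≤ q}

/-- `mu` is the conjugate of `lam`: for each `k ≥ 1`, the multiplicity of `k` in `mu`
equals (number of parts of `lam` that are `≥ k`) minus (number of parts `≥ k + 1`). -/
def IsConjugate {n : ℕ} (lam mu : n.Partition) : Prop :=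
  ∀ k : ℕ, 1 ≤ k →
    mu.parts.count k =
      Multiset.countP (fun p => k ≤ p) lam.parts -
        Multiset.countP (fun p => k + 1 ≤ p) lam.parts

open Finset

/-! ### Triangular numbers -/

lemma T_eq_sum_Icc (m : ℕ) : T m = ∑ i ∈ Icc 1 m, i := by
  have h := sum_range_id (m + 1)
  rw [range_eq_Ico, sum_eq_sum_Ico_succ_bot m.succ_pos, zero_add, Nat.add_sub_cancel,
    mul_comm] at h
  exact h.symm

lemma T_succ (m : ℕ) : T (m + 1) = T m + (m + 1) := by
  simp only [T_eq_sum_Icc, sum_Icc_succ_top (Nat.le_add_left 1 m)]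

lemma T_mono : Monotone T :=
  monotone_nat_of_le_succ fun m => by rw [T_succ]; omega

/-! ### Sets of positive integers and their excess over a staircase -/

/-- The `i`-th smallest element (`1 ≤ i ≤ s`) of the set of `s` positive integers encoded by `μ`:
each part `k` of `μ` raises the `k` largest elements of the staircase `1 < ⋯ < s` by one. The
index `0` is a sentinel below the set, with value `0` if the parts of `μ` are at most `s`. -/
def stair (s : ℕ) (μ : Multiset ℕ) (i : ℕ) : ℕ := i + μ.countP (fun k => s < k + i)

/-- The set of `s` positive integers whose excess over `{1, …, s}` is encoded by `μ`. -/
def stairSet (s : ℕ) (μ : Multiset ℕ) : Finset ℕ := (Icc 1 s).image (stair s μ)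

/-- The number of gaps of a set of part sizes, so that `gapBonus lam` is the number of gaps of the
set of parts of `lam`. -/
def gapCount (D : Finset ℕ) : ℕ := #{L ∈ D | 2 ≤ L ∧ L - 1 ∉ D}

section Stair

variable {s : ℕ} {μ : Multiset ℕ}

lemma stair_strictMono (s : ℕ) (μ : Multiset ℕ) : StrictMono (stair s μ) := by
  intro i j hij
  have hcount : μ.countP (fun k => s < k + i) ≤ μ.countP (fun k => s < k + j) := by
    simp only [Multiset.countP_eq_card_filter]
    exact Multiset.card_le_card (Multiset.monotone_filter_right μ fun k hk => by omega)
  exact Nat.add_lt_add_of_lt_of_le hij hcount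

lemma stair_succ {i : ℕ} (hi : i ≤ s) :
    stair s μ (i + 1) = stair s μ i + 1 + μ.count (s - i) := by
  have hsplit : μ.countP (fun k => s < k + (i + 1)) =
      μ.countP (fun k => s < k + i) + μ.count (s - i) := by
    induction μ using Multiset.induction_on with
    | empty => simp
    | cons a μ ih =>
      simp only [Multiset.countP_cons, Multiset.count_cons, ih]
      split_ifs <;> omega
  rw [stair, stair, hsplit]
  omega

lemma stair_eq_self {i : ℕ} (h : ∀ k ∈ μ, k + i ≤ s) : stair s μ i = i := by
  rw [stair, Multiset.countP_eq_zero.mpr fun k hk => (h k hk).not_gt, add_zero]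

lemma mem_stairSet {x : ℕ} : x ∈ stairSet s μ ↔ ∃ i ∈ Icc 1 s, stair s μ i = x :=
  mem_image

lemma pos_of_mem_stairSet {x : ℕ} (hx : x ∈ stairSet s μ) : 0 < x := by
  obtain ⟨i, hi, rfl⟩ := mem_stairSet.mp hx
  exact Nat.add_pos_left (mem_Icc.mp hi).1 _

lemma card_stairSet (s : ℕ) (μ : Multiset ℕ) : #(stairSet s μ) = s := by
  rw [stairSet, card_image_of_injective _ (stair_strictMono s μ).injective, Nat.card_Icc,
    Nat.add_sub_cancel]

lemma sum_stairSet (hμ : ∀ k ∈ μ, k ≤ s) : ∑ x ∈ stairSet s μ, x = T s + μ.sum := by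
  have hcount : ∑ i ∈ Icc 1 s, μ.countP (fun k => s < k + i) = μ.sum := by
    induction μ using Multiset.induction_on with
    | empty => simp
    | cons a μ ih =>
      obtain ⟨ha, hμ⟩ := Multiset.forall_mem_cons.mp hμ
      have hraised : {i ∈ Icc 1 s | s < a + i} = Icc (s + 1 - a) s := by
        ext i
        simp only [mem_filter, mem_Icc]
        omega
      simp only [Multiset.countP_cons, sum_add_distrib, ih hμ, ← card_filter, hraised,
        Nat.card_Icc, Multiset.sum_cons]
      omega
  rw [stairSet, sum_image (stair_strictMono s μ).injective.injOn, T_eq_sum_Icc, ← hcount,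
    ← sum_add_distrib]
  rfl

/-- The `(i + 1)`-st element starts a new run exactly when `s - i` is a part of `μ`. -/
lemma gap_stair_succ_iff (hμ : ∀ k ∈ μ, k ≤ s) {i : ℕ} (hi : i < s) :
    (2 ≤ stair s μ (i + 1) ∧ stair s μ (i + 1) - 1 ∉ stairSet s μ) ↔ s - i ∈ μ := by
  have hstep := stair_succ (μ := μ) hi.le
  constructor
  · rintro ⟨htwo, hgap⟩
    by_contra hnot
    rw [Multiset.count_eq_zero_of_notMem hnot, add_zero] at hstep
    rw [hstep, Nat.add_sub_cancel] at hgap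
    rcases i.eq_zero_or_pos with rfl | hipos
    · have : stair s μ 0 = 0 := stair_eq_self hμ
      omega
    · exact hgap (mem_stairSet.mpr ⟨i, mem_Icc.mpr ⟨hipos, hi.le⟩, rfl⟩)
  · intro hmem
    have hcount := Multiset.count_pos.mpr hmem
    refine ⟨by omega, fun hpred => ?_⟩
    obtain ⟨j, -, hj⟩ := mem_stairSet.mp hpred
    have hij : i < j := (stair_strictMono s μ).lt_iff_lt.mp (by omega)
    have hji : j < i + 1 := (stair_strictMono s μ).lt_iff_lt.mp (by omega)
    omega

lemma gapCount_stairSet (hμ : ∀ k ∈ μ, k ∈ Icc 1 s) :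
    gapCount (stairSet s μ) = #μ.toFinset := by
  have hle : ∀ k ∈ μ, k ≤ s := fun k hk => (mem_Icc.mp (hμ k hk)).2
  have hgaps : {L ∈ stairSet s μ | 2 ≤ L ∧ L - 1 ∉ stairSet s μ} =
      μ.toFinset.image fun k => stair s μ (s - k + 1) := by
    ext L
    simp only [mem_filter, mem_image, Multiset.mem_toFinset]
    constructor
    · rintro ⟨hL, hgap⟩
      obtain ⟨i, hi, rfl⟩ := mem_stairSet.mp hL
      obtain ⟨hi₁, his⟩ := mem_Icc.mp hi
      obtain ⟨i, rfl⟩ := Nat.exists_eq_add_of_le' hi₁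
      exact ⟨s - i, (gap_stair_succ_iff hle his).mp hgap, by rw [Nat.sub_sub_self (by omega)]⟩
    · rintro ⟨k, hk, rfl⟩
      obtain ⟨hk₁, hks⟩ := mem_Icc.mp (hμ k hk)
      refine ⟨mem_stairSet.mpr ⟨_, mem_Icc.mpr ⟨by omega, by omega⟩, rfl⟩,
        (gap_stair_succ_iff hle (by omega)).mpr ?_⟩
      rwa [Nat.sub_sub_self hks]
  rw [gapCount, hgaps, card_image_of_injOn]
  intro k hk l hl hkl
  have hk := mem_Icc.mp (hμ k (Multiset.mem_toFinset.mp hk))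
  have hl := mem_Icc.mp (hμ l (Multiset.mem_toFinset.mp hl))
  have := (stair_strictMono s μ).injective hkl
  omega

lemma stairSet_injOn (s : ℕ) : Set.InjOn (stairSet s) {μ | ∀ k ∈ μ, k ∈ Icc 1 s} := by
  intro μ hμ μ' hμ' hset
  have henum (ρ : Multiset ℕ) (hρ : stairSet s ρ = stairSet s μ) :
      (fun i : Fin s => stair s ρ (i + 1)) = (stairSet s μ).orderEmbOfFin (card_stairSet s μ) := by
    refine orderEmbOfFin_unique _ (fun i => ?_) fun i j hij => stair_strictMono s ρ (by simpa)
    rw [← hρ]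
    exact mem_stairSet.mpr ⟨i + 1, mem_Icc.mpr ⟨by omega, i.isLt⟩, rfl⟩
  have hsucc : ∀ i < s, stair s μ (i + 1) = stair s μ' (i + 1) := fun i hi =>
    congrFun ((henum μ rfl).trans (henum μ' hset.symm).symm) ⟨i, hi⟩
  have hzero : stair s μ 0 = stair s μ' 0 := by
    rw [stair_eq_self fun k hk => (mem_Icc.mp (hμ k hk)).2,
      stair_eq_self fun k hk => (mem_Icc.mp (hμ' k hk)).2]
  have hstair : ∀ i ≤ s, stair s μ i = stair s μ' i := by
    rintro (_ | i) hi
    exacts [hzero, hsucc i hi]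
  ext k
  by_cases hk : k ∈ Icc 1 s
  · obtain ⟨hk₁, hks⟩ := mem_Icc.mp hk
    have h := stair_succ (μ := μ) (Nat.sub_le s k)
    have h' := stair_succ (μ := μ') (Nat.sub_le s k)
    rw [hstair _ (by omega), hstair _ (by omega), Nat.sub_sub_self hks] at h
    rw [Nat.sub_sub_self hks] at h'
    omega
  · rw [Multiset.count_eq_zero_of_notMem (mt (hμ k) hk),
      Multiset.count_eq_zero_of_notMem (mt (hμ' k) hk)]

/-- Adding an element above all others lengthens every part of the encoding by one, and creates one
new part `1` for each integer skipped. -/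
lemma stairSet_succ_eq_insert (hμ : ∀ k ∈ μ, 0 < k) {M : ℕ} (hM : stair s μ s < M) :
    stairSet (s + 1) (μ.map (· + 1) + Multiset.replicate (M - stair s μ s - 1) 1) =
      insert M (stairSet s μ) := by
  set μ' := μ.map (· + 1) + Multiset.replicate (M - stair s μ s - 1) 1
  have hlow : ∀ i ≤ s, stair (s + 1) μ' i = stair s μ i := by
    intro i hi
    have hnew : (Multiset.replicate (M - stair s μ s - 1) 1).countP (fun k => s + 1 < k + i) = 0 :=
      Multiset.countP_eq_zero.mpr fun k hk => by
        rw [Multiset.eq_of_mem_replicate hk]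
        omega
    rw [stair, stair, Multiset.countP_add, hnew, add_zero,
      Multiset.countP_map, Multiset.countP_eq_card_filter]
    congr 2
    exact Multiset.filter_congr fun k _ => by omega
  have hone : μ'.count 1 = M - stair s μ s - 1 := by
    rw [Multiset.count_add, Multiset.count_replicate_self, Multiset.count_eq_zero_of_notMem,
      zero_add]
    rw [Multiset.mem_map]
    rintro ⟨k, hk, hk1⟩
    have := hμ k hk
    omega
  have htop : stair (s + 1) μ' (s + 1) = M := by
    rw [stair_succ s.le_succ, hlow s le_rfl, Nat.succ_eq_add_one, Nat.add_sub_cancel_left, hone]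
    omega
  rw [stairSet, ← insert_Icc_right_eq_Icc_add_one (by omega), image_insert, htop, stairSet]
  exact congrArg _ (image_congr fun i hi => hlow i (mem_Icc.mp hi).2)

lemma exists_stairSet_eq (D : Finset ℕ) (hD : ∀ x ∈ D, 0 < x) :
    ∃ μ : Multiset ℕ, (∀ k ∈ μ, k ∈ Icc 1 #D) ∧ stairSet #D μ = D := by
  induction D using Finset.induction_on_max with
  | empty => exact ⟨0, by simp, rfl⟩
  | insert M D hmax ih =>
    obtain ⟨hM, hD⟩ := forall_mem_insert _ _ _ |>.mp hD
    obtain ⟨μ, hμ, hset⟩ := ih hD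
    have hlt : stair #D μ #D < M := by
      rcases (#D).eq_zero_or_pos with hzero | hpos
      · rw [stair_eq_self fun k hk => by have := mem_Icc.mp (hμ k hk); omega]
        omega
      · have hmem : stair #D μ #D ∈ stairSet #D μ :=
          mem_stairSet.mpr ⟨#D, right_mem_Icc.mpr hpos, rfl⟩
        exact hmax _ (by rwa [hset] at hmem)
    rw [card_insert_of_notMem fun h => (hmax M h).false]
    refine ⟨_, ?_, (stairSet_succ_eq_insert (fun k hk => (mem_Icc.mp (hμ k hk)).1) hlt).trans
      (by rw [hset])⟩
    simp only [Multiset.mem_add, Multiset.mem_map, mem_Icc]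
    rintro k (⟨l, hl, rfl⟩ | hk)
    · have := mem_Icc.mp (hμ l hl)
      omega
    · rw [Multiset.eq_of_mem_replicate hk]
      omega

end Stair

lemma T_card_le_sum (D : Finset ℕ) (hD : ∀ x ∈ D, 0 < x) : T #D ≤ ∑ x ∈ D, x := by
  obtain ⟨μ, hμ, hset⟩ := exists_stairSet_eq D hD
  have hsum := sum_stairSet fun k hk => (mem_Icc.mp (hμ k hk)).2
  rw [hset] at hsum
  omega

/-! ### Pairs of partitions -/

/-- The set of multisets that list the parts of a partition of `n`. -/
def partitionParts (n : ℕ) : Finset (Multiset ℕ) :=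
  (univ : Finset n.Partition).image Nat.Partition.parts

/-- The bipartitions of `q`: pairs of partitions, given by their parts, of total size `q`. -/
def bipartitions (q : ℕ) : Finset (Multiset ℕ × Multiset ℕ) :=
  (antidiagonal q).biUnion fun p => partitionParts p.1 ×ˢ partitionParts p.2

/-- The total number of distinct parts of the two members of a bipartition. -/
def bonus (x : Multiset ℕ × Multiset ℕ) : ℕ := #x.1.toFinset + #x.2.toFinset

/-- The maximal bonus of a bipartition of `q`. -/
def maxBonus (q : ℕ) : ℕ := (bipartitions q).sup bonus

lemma mem_partitionParts {n : ℕ} {m : Multiset ℕ} :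
    m ∈ partitionParts n ↔ (∀ k ∈ m, 0 < k) ∧ m.sum = n := by
  simp only [partitionParts, mem_image, mem_univ, true_and]
  constructor
  · rintro ⟨p, rfl⟩
    exact ⟨fun _ => p.parts_pos, p.parts_sum⟩
  · rintro ⟨hpos, hsum⟩
    exact ⟨⟨m, fun {k} => hpos k, hsum⟩, rfl⟩

lemma mem_bipartitions {q : ℕ} {x : Multiset ℕ × Multiset ℕ} :
    x ∈ bipartitions q ↔
      (∀ k ∈ x.1, 0 < k) ∧ (∀ k ∈ x.2, 0 < k) ∧ x.1.sum + x.2.sum = q := by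
  simp only [bipartitions, mem_biUnion, mem_product, mem_partitionParts]
  constructor
  · rintro ⟨p, hp, ⟨hpos₁, hsum₁⟩, hpos₂, hsum₂⟩
    exact ⟨hpos₁, hpos₂, by rw [hsum₁, hsum₂, mem_antidiagonal.mp hp]⟩
  · rintro ⟨hpos₁, hpos₂, hsum⟩
    exact ⟨(x.1.sum, x.2.sum), mem_antidiagonal.mpr hsum, ⟨hpos₁, rfl⟩, hpos₂, rfl⟩

lemma bipartitions_nonempty (q : ℕ) : (bipartitions q).Nonempty :=
  ⟨(0, Multiset.replicate q 1), mem_bipartitions.mpr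
    ⟨by simp, fun k hk => by simp [Multiset.eq_of_mem_replicate hk], by simp⟩⟩

lemma bonus_pos {q : ℕ} (hq : 0 < q) {x : Multiset ℕ × Multiset ℕ} (hx : x ∈ bipartitions q) :
    0 < bonus x := by
  by_contra! h
  obtain ⟨h₁, h₂⟩ := Nat.add_eq_zero_iff.mp (Nat.le_zero.mp h)
  rw [card_eq_zero, Multiset.toFinset_eq_empty] at h₁ h₂
  have hsum := (mem_bipartitions.mp hx).2.2
  simp only [h₁, h₂, Multiset.sum_zero, add_zero] at hsum
  omega

lemma bonus_le_maxBonus {q : ℕ} {x : Multiset ℕ × Multiset ℕ} (hx : x ∈ bipartitions q) :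
    bonus x ≤ maxBonus q :=
  le_sup (f := bonus) hx

lemma maxBonus_pos {q : ℕ} (hq : 0 < q) : 0 < maxBonus q := by
  obtain ⟨x, hx⟩ := bipartitions_nonempty q
  exact (bonus_pos hq hx).trans_le (bonus_le_maxBonus hx)

/-! ### Partitions of full support -/

/-- The parts of the partition encoded by `(μ, ν)`: one copy of each element of `stairSet s μ`,
and the surplus copies `ν`. -/
def assemble (s : ℕ) (x : Multiset ℕ × Multiset ℕ) : Multiset ℕ := (stairSet s x.1).val + x.2

section Assemble

variable {s q : ℕ} {x : Multiset ℕ × Multiset ℕ}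

lemma mem_Icc_of_mem_fst (hq : q ≤ s) (hx : x ∈ bipartitions q) {k : ℕ} (hk : k ∈ x.1) :
    k ∈ Icc 1 s := by
  obtain ⟨hpos, -, hsum⟩ := mem_bipartitions.mp hx
  have := Multiset.le_sum_of_mem hk
  exact mem_Icc.mpr ⟨hpos k hk, by omega⟩

lemma mem_stairSet_of_mem_snd (hq : q ≤ s) (hx : x ∈ bipartitions q) {i : ℕ} (hi : i ∈ x.2) :
    i ∈ stairSet s x.1 := by
  obtain ⟨-, hpos, hsum⟩ := mem_bipartitions.mp hx
  have hi_le := Multiset.le_sum_of_mem hi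
  refine mem_stairSet.mpr ⟨i, mem_Icc.mpr ⟨hpos i hi, by omega⟩, stair_eq_self fun k hk => ?_⟩
  have hk_le := Multiset.le_sum_of_mem hk
  omega

lemma toFinset_assemble (hq : q ≤ s) (hx : x ∈ bipartitions q) :
    (assemble s x).toFinset = stairSet s x.1 := by
  rw [assemble, Multiset.toFinset_add, val_toFinset, union_eq_left]
  exact fun i hi => mem_stairSet_of_mem_snd hq hx (Multiset.mem_toFinset.mp hi)

lemma assemble_injOn (hq : q ≤ s) : Set.InjOn (assemble s) (bipartitions q) := by
  intro x hx y hy hxy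
  have hset : stairSet s x.1 = stairSet s y.1 := by
    rw [← toFinset_assemble hq hx, ← toFinset_assemble hq hy, hxy]
  have hfst : x.1 = y.1 := stairSet_injOn s (fun k => mem_Icc_of_mem_fst hq hx)
    (fun k => mem_Icc_of_mem_fst hq hy) hset
  rw [assemble, assemble, hset] at hxy
  exact Prod.ext hfst (add_left_cancel hxy)

lemma exists_partition_parts_eq_assemble (hq : q ≤ s) (hx : x ∈ bipartitions q) :
    ∃ lam : (T s + q).Partition, lam.parts = assemble s x := by
  refine ⟨⟨assemble s x, fun {i} hi => ?_, ?_⟩, rfl⟩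
  · rw [← Multiset.mem_toFinset, toFinset_assemble hq hx] at hi
    exact pos_of_mem_stairSet hi
  · have hstair := sum_stairSet fun k hk => (mem_Icc.mp (mem_Icc_of_mem_fst hq hx hk)).2
    rw [assemble, Multiset.sum_add, sum_val, ← (mem_bipartitions.mp hx).2.2, ← add_assoc, ← hstair]
    rfl

lemma sum_toFinset_add_sum_surplus {n : ℕ} (lam : n.Partition) :
    ∑ i ∈ lam.parts.toFinset, i + (lam.parts - lam.parts.dedup).sum = n := by
  conv_rhs => rw [← lam.parts_sum, ← add_tsub_cancel_of_le (Multiset.dedup_le lam.parts)]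
  rw [Multiset.sum_add, ← Multiset.toFinset_val, sum_val]
  rfl

lemma exists_bipartition_of_supp_eq {lam : (T s + q).Partition} (hs : supp lam = s) :
    ∃ x ∈ bipartitions q, lam.parts = assemble s x := by
  have hpos : ∀ i ∈ lam.parts, 0 < i := fun _ => lam.parts_pos
  obtain ⟨μ, hμ, hset⟩ :=
    exists_stairSet_eq lam.parts.toFinset fun i hi => hpos i (Multiset.mem_toFinset.mp hi)
  rw [show #lam.parts.toFinset = s from hs] at hμ hset
  have hsizes := sum_stairSet fun k hk => (mem_Icc.mp (hμ k hk)).2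
  rw [hset] at hsizes
  have hsum := sum_toFinset_add_sum_surplus lam
  refine ⟨(μ, lam.parts - lam.parts.dedup), mem_bipartitions.mpr
    ⟨fun k hk => (mem_Icc.mp (hμ k hk)).1,
      fun k hk => hpos k (Multiset.mem_of_le (Multiset.sub_le_self _ _) hk),
      by dsimp only; omega⟩, ?_⟩
  rw [assemble, hset, Multiset.toFinset_val, add_tsub_cancel_of_le (Multiset.dedup_le _)]

variable {n : ℕ} {lam : n.Partition}

lemma supp_of_parts_eq_assemble (hq : q ≤ s) (hx : x ∈ bipartitions q)
    (h : lam.parts = assemble s x) : supp lam = s := by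
  rw [supp, h, toFinset_assemble hq hx, card_stairSet]

lemma gapBonus_of_parts_eq_assemble (hq : q ≤ s) (hx : x ∈ bipartitions q)
    (h : lam.parts = assemble s x) : gapBonus lam = #x.1.toFinset := by
  rw [← gapCount_stairSet fun k => mem_Icc_of_mem_fst hq hx, ← toFinset_assemble hq hx, ← h]
  simp only [gapBonus, gapCount, Multiset.mem_toFinset]

lemma multBonus_of_parts_eq_assemble (hq : q ≤ s) (hx : x ∈ bipartitions q)
    (h : lam.parts = assemble s x) : multBonus lam = #x.2.toFinset := by
  rw [multBonus, h, toFinset_assemble hq hx]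
  congr 1
  ext i
  rw [mem_filter, Multiset.mem_toFinset, assemble, Multiset.count_add]
  constructor
  · rintro ⟨hi, htwo⟩
    rw [Multiset.count_eq_one_of_mem (nodup _) hi] at htwo
    exact Multiset.count_pos.mp (by omega)
  · intro hi
    have hmem := mem_stairSet_of_mem_snd hq hx hi
    have hcount := Multiset.count_pos.mpr hi
    exact ⟨hmem, by rw [Multiset.count_eq_one_of_mem (nodup _) hmem]; omega⟩

lemma deg_of_parts_eq_assemble (hq : q ≤ s) (hx : x ∈ bipartitions q)
    (h : lam.parts = assemble s x) : deg lam = s * (s - 1) + bonus x := by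
  rw [deg, supp_of_parts_eq_assemble hq hx h, gapBonus_of_parts_eq_assemble hq hx h,
    multBonus_of_parts_eq_assemble hq hx h, bonus, add_assoc]

end Assemble

/-! ### Maximizers -/

section Maximizers

variable {s q : ℕ}

lemma T_supp_le {n : ℕ} (lam : n.Partition) : T (supp lam) ≤ n := by
  refine (T_card_le_sum _ fun i hi => lam.parts_pos (Multiset.mem_toFinset.mp hi)).trans ?_
  have hsum := sum_toFinset_add_sum_surplus lam
  omega

lemma supp_le (hq : q ≤ s) (lam : (T s + q).Partition) : supp lam ≤ s := by
  by_contra! hlt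
  have hle : T (s + 1) ≤ T s + q := (T_mono hlt).trans (T_supp_le lam)
  rw [T_succ] at hle
  omega

lemma deg_le_of_supp_lt {n : ℕ} {lam : n.Partition} (h : supp lam < s) :
    deg lam ≤ s * (s - 1) := by
  have hgap : gapBonus lam ≤ supp lam := card_filter_le _ _
  have hmult : multBonus lam ≤ supp lam := card_filter_le _ _
  calc deg lam ≤ supp lam * (supp lam - 1) + supp lam + supp lam := by unfold deg; gcongr
    _ = (supp lam + 1) * supp lam := by
      cases supp lam with
      | zero => rfl
      | succ r => rw [Nat.add_sub_cancel]; ring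
    _ ≤ s * (s - 1) := Nat.mul_le_mul h (Nat.le_sub_one_of_lt h)

lemma maxDeg_eq (hq : q ≤ s) : maxDeg (T s + q) = s * (s - 1) + maxBonus q := by
  apply le_antisymm
  · refine Finset.sup_le fun lam _ => ?_
    rcases (supp_le hq lam).lt_or_eq with hlt | heq
    · exact (deg_le_of_supp_lt hlt).trans (Nat.le_add_right _ _)
    · obtain ⟨x, hx, hparts⟩ := exists_bipartition_of_supp_eq heq
      rw [deg_of_parts_eq_assemble hq hx hparts]
      gcongr
      exact bonus_le_maxBonus hx
  · obtain ⟨x, hx, hmax⟩ := exists_mem_eq_sup _ (bipartitions_nonempty q) bonus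
    obtain ⟨lam, hparts⟩ := exists_partition_parts_eq_assemble hq hx
    rw [maxBonus, hmax, ← deg_of_parts_eq_assemble hq hx hparts]
    exact le_sup (f := deg) (mem_univ lam)

lemma supp_eq_of_deg_eq_maxDeg (hq₀ : 0 < q) (hq : q ≤ s) {lam : (T s + q).Partition}
    (h : deg lam = maxDeg (T s + q)) : supp lam = s := by
  refine (supp_le hq lam).eq_of_not_lt fun hlt => ?_
  have hdeg := deg_le_of_supp_lt hlt
  have hpos := maxBonus_pos hq₀
  rw [h, maxDeg_eq hq] at hdeg
  omega

theorem third_window_general (hq₀ : 0 < q) (hq : q ≤ s) (P : ℕ → ℕ → Prop)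
    [∀ a b, Decidable (P a b)] :
    #{lam : (T s + q).Partition |
        deg lam = maxDeg (T s + q) ∧ P (gapBonus lam) (multBonus lam)} =
      #{x ∈ bipartitions q | bonus x = maxBonus q ∧ P #x.1.toFinset #x.2.toFinset} := by
  rw [← card_image_of_injective (f := Nat.Partition.parts) _ fun _ _ => Nat.Partition.ext,
    ← card_image_of_injOn ((assemble_injOn hq).mono (filter_subset _ _))]
  congr 1
  ext m
  simp only [mem_image, mem_filter, mem_univ, true_and]
  constructor
  · rintro ⟨lam, ⟨hmax, hP⟩, rfl⟩
    obtain ⟨x, hx, hparts⟩ :=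
      exists_bipartition_of_supp_eq (supp_eq_of_deg_eq_maxDeg hq₀ hq hmax)
    rw [deg_of_parts_eq_assemble hq hx hparts, maxDeg_eq hq, Nat.add_left_cancel_iff] at hmax
    rw [gapBonus_of_parts_eq_assemble hq hx hparts,
      multBonus_of_parts_eq_assemble hq hx hparts] at hP
    exact ⟨x, ⟨hx, hmax, hP⟩, hparts.symm⟩
  · rintro ⟨x, ⟨hx, hmax, hP⟩, rfl⟩
    obtain ⟨lam, hparts⟩ := exists_partition_parts_eq_assemble hq hx
    refine ⟨lam, ⟨?_, ?_⟩, hparts⟩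
    · rw [deg_of_parts_eq_assemble hq hx hparts, maxDeg_eq hq, hmax]
    · rwa [gapBonus_of_parts_eq_assemble hq hx hparts,
        multBonus_of_parts_eq_assemble hq hx hparts]

end Maximizers

/-! ### The window `q = 3` -/

lemma partitionParts_zero : partitionParts 0 = {0} := rfl

lemma partitionParts_succ (n : ℕ) :
    partitionParts (n + 1) =
      (Icc 1 (n + 1)).biUnion fun a => (partitionParts (n + 1 - a)).image (a ::ₘ ·) := by
  ext m
  simp only [mem_biUnion, mem_image, mem_partitionParts, mem_Icc]
  constructor
  · rintro ⟨hpos, hsum⟩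
    obtain ⟨a, ha⟩ : ∃ a, a ∈ m := by
      refine Multiset.exists_mem_of_ne_zero ?_
      rintro rfl
      simp at hsum
    obtain ⟨m, rfl⟩ := Multiset.exists_cons_of_mem ha
    rw [Multiset.sum_cons] at hsum
    obtain ⟨hapos, hmpos⟩ := Multiset.forall_mem_cons.mp hpos
    exact ⟨a, ⟨hapos, by omega⟩, m, ⟨hmpos, by omega⟩, rfl⟩
  · rintro ⟨a, ⟨ha, han⟩, m, ⟨hpos, hsum⟩, rfl⟩
    exact ⟨Multiset.forall_mem_cons.mpr ⟨ha, hpos⟩, by rw [Multiset.sum_cons, hsum]; omega⟩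

lemma partitionParts_one : partitionParts 1 = {{1}} := by
  rw [partitionParts_succ]; rfl

lemma partitionParts_two : partitionParts 2 = {{2}, {1, 1}} := by
  rw [partitionParts_succ, show Icc 1 (1 + 1) = {1, 2} from rfl, biUnion_insert,
    singleton_biUnion, partitionParts_one, partitionParts_zero]
  decide

lemma partitionParts_three : partitionParts 3 = {{3}, {2, 1}, {1, 1, 1}} := by
  rw [partitionParts_succ, show Icc 1 (2 + 1) = {1, 2, 3} from rfl, biUnion_insert,
    biUnion_insert, singleton_biUnion, partitionParts_two, partitionParts_one, partitionParts_zero]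
  decide

lemma bipartitions_three : bipartitions 3 =
    {(0, {3}), (0, {2, 1}), (0, {1, 1, 1}), ({1}, {2}), ({1}, {1, 1}),
      ({2}, {1}), ({1, 1}, {1}), ({3}, 0), ({2, 1}, 0), ({1, 1, 1}, 0)} := by
  rw [bipartitions, show antidiagonal 3 = {(0, 3), (1, 2), (2, 1), (3, 0)} from rfl]
  simp only [biUnion_insert, singleton_biUnion, partitionParts_three, partitionParts_two,
    partitionParts_one, partitionParts_zero]
  decide

lemma maxBonus_three : maxBonus 3 = 2 := by
  rw [maxBonus, bipartitions_three]
  decide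

/-- for `n = T s + 3` with `s ≥ 3`, there are exactly `6` maximizers:
`1` with profile `(2,0)`, `4` with profile `(1,1)`, and `1` with profile `(0,2)`. -/
theorem third_window (s : ℕ) (hs : 3 ≤ s) :
    (Finset.univ.filter
        (fun lam : (T s + 3).Partition => deg lam = maxDeg (T s + 3))).card = 6 ∧
      (Finset.univ.filter
        (fun lam : (T s + 3).Partition =>
          deg lam = maxDeg (T s + 3) ∧ gapBonus lam = 2 ∧ multBonus lam = 0)).card = 1 ∧
      (Finset.univ.filter
        (fun lam : (T s + 3).Partition =>
          deg lam = maxDeg (T s + 3) ∧ gapBonus lam = 1 ∧ multBonus lam = 1)).card = 4 ∧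
      (Finset.univ.filter
        (fun lam : (T s + 3).Partition =>
          deg lam = maxDeg (T s + 3) ∧ gapBonus lam = 0 ∧ multBonus lam = 2)).card = 1 := by
  have count := third_window_general (q := 3) (s := s) (by norm_num) hs
  have total := count fun _ _ => True
  simp only [and_true] at total
  rw [total, count (fun a b => a = 2 ∧ b = 0), count (fun a b => a = 1 ∧ b = 1),
    count (fun a b => a = 0 ∧ b = 2), maxBonus_three, bipartitions_three]
  decide

end PartitionDegree
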